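/- arXiv:1311.3474 — 2 statements merged into one kernel-verified Lean document; each statement's English description precedes it below -/
import Mathlib

section
/- Let Λ₋, Λ₊ : ℝ → ℝ be C¹ functions with Λ₋(ζ) < Λ₊(ζ) and Λ₊'(ζ) < 0 for all ζ, and let b : ℝ → ℝ be a C¹ function with Λ₊(b(α)) = Λ₋(α) for all α. If f(α) ≠ 0, then the derivative at α of the map α ↦ (t(α, b(α)), x(α, b(α))) is nonzero; that is, every singular point (α, b(α)) with f(α) ≠ 0 is a fold point of the hodograph map Π. -/
/-! Write `Δ = Λp - Λm > 0`. Along the curve, `dt/dα = b'(α) / Δ(b α) - 1 / Δ(α)`, while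
differentiating `Λp (b α) = Λm α` gives `Λp'(b α) * b'(α) = Λm'(α)`; hence
`f(α) = Λp'(b α) * dt/dα`. So already the time component of the derivative is nonzero when
`f(α) ≠ 0`. Differentiability of the space component is needed as well, since `deriv` of the pair
would otherwise be `0` by convention. -/

/-- The time component of the hodograph map. -/
noncomputable def tmap (Λm Λp : ℝ → ℝ) (α β : ℝ) : ℝ :=
  ∫ ζ in α..β, 1 / (Λp ζ - Λm ζ)

/-- The space component of the hodograph map. -/
noncomputable def xmap (Λm Λp : ℝ → ℝ) (α β : ℝ) : ℝ :=
  (1 / 2) * (α + β + ∫ ζ in α..β, (Λp ζ + Λm ζ) / (Λp ζ - Λm ζ))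

/-- The function `f` of assumption (H4). -/
noncomputable def ffun (Λm Λp b : ℝ → ℝ) (α : ℝ) : ℝ :=
  deriv Λm α / (Λp (b α) - Λm (b α)) - deriv Λp (b α) / (Λp α - Λm α)

/-- Leibniz rule for a continuous integrand, lower limit `a` and upper limit `b a`. -/
theorem hasDerivAt_integral_id_comp {g b : ℝ → ℝ} (hg : Continuous g) {α b' : ℝ}
    (hb : HasDerivAt b b' α) :
    HasDerivAt (fun a => ∫ ζ in a..b a, g ζ) (g (b α) * b' - g α) α := by
  have key : ∀ x : ℝ, HasDerivAt (fun u => ∫ ζ in (0 : ℝ)..u, g ζ) (g x) x := fun x =>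
    intervalIntegral.integral_hasDerivAt_right (hg.intervalIntegrable _ _)
      (hg.stronglyMeasurableAtFilter _ _) hg.continuousAt
  have h := ((key (b α)).comp α hb).sub (key α)
  refine h.congr_of_eventuallyEq (Filter.Eventually.of_forall fun a => ?_)
  exact (intervalIntegral.integral_interval_sub_left
    (hg.intervalIntegrable _ _) (hg.intervalIntegrable _ _)).symm

/-- Every singular point `(α, b(α))` with `f(α) ≠ 0` is a fold point of the
hodograph map `Π`: the derivative of `α ↦ (t(α, b(α)), x(α, b(α)))` is
nonzero there. -/
theorem fold_point_of_f_ne_zero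
    (Λm Λp b : ℝ → ℝ)
    (hm : ContDiff ℝ 1 Λm) (hp : ContDiff ℝ 1 Λp) (hb : ContDiff ℝ 1 b)
    (hlt : ∀ ζ : ℝ, Λm ζ < Λp ζ) (hp' : ∀ ζ : ℝ, deriv Λp ζ < 0)
    (hcomp : ∀ α : ℝ, Λp (b α) = Λm α)
    (α : ℝ) (hf : ffun Λm Λp b α ≠ 0) :
    deriv (fun a => ((tmap Λm Λp a (b a), xmap Λm Λp a (b a)) : ℝ × ℝ)) α ≠ 0 := by
  have hne : ∀ ζ, Λp ζ - Λm ζ ≠ 0 := fun ζ => (sub_pos.2 (hlt ζ)).ne'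
  have hΔ : Continuous fun ζ => Λp ζ - Λm ζ := hp.continuous.sub hm.continuous
  have hb' : HasDerivAt b (deriv b α) α := (hb.differentiable one_ne_zero α).hasDerivAt
  have hp1 : HasDerivAt Λp (deriv Λp (b α)) (b α) :=
    (hp.differentiable one_ne_zero (b α)).hasDerivAt
  have hchain : deriv Λm α = deriv Λp (b α) * deriv b α := by
    have h := hp1.comp α hb'
    rw [show Λp ∘ b = Λm from funext hcomp] at h
    exact h.deriv
  have ht : HasDerivAt (fun a => tmap Λm Λp a (b a)) _ α :=
    hasDerivAt_integral_id_comp (continuous_const.div hΔ hne) hb'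
  have hx : HasDerivAt (fun a => xmap Λm Λp a (b a)) _ α :=
    (((hasDerivAt_id α).add hb').add (hasDerivAt_integral_id_comp
      ((hp.continuous.add hm.continuous).div hΔ hne) hb')).const_mul (1 / 2)
  rw [(ht.prodMk hx).deriv]
  intro h0
  have h1 := congrArg Prod.fst h0
  apply hf
  calc ffun Λm Λp b α
      = deriv Λp (b α) *
          (1 / (Λp (b α) - Λm (b α)) * deriv b α - 1 / (Λp α - Λm α)) := by
        rw [ffun, hchain]; ring
    _ = 0 := mul_eq_zero_of_right _ h1
end

section
/- Let Λ₋, Λ₊ : ℝ → ℝ be C² functions with Λ₋(ζ) < Λ₊(ζ), Λ₋'(ζ) < 0 and Λ₊'(ζ) < 0 for all ζ, let b : ℝ → ℝ be a C¹ function with Λ₊(b(α)) = Λ₋(α) for all α, and suppose α₀ < β₀ := b(α₀) satisfy Λ₋(α₀) = Λ₊(β₀) = 0, f(α₀) = 0 and f'(α₀) < 0. Then the derivative at α₀ of the map α ↦ (t(α, b(α)), x(α, b(α))) equals (0, 0), while its second derivative at α₀ is nonzero; in particular the second derivative of α ↦ t(α, b(α)) at α₀ equals f'(α₀)/Λ₊'(β₀)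 > 0. That is, (α₀, β₀) is a cusp point of the hodograph map Π. -/
lemma hasDerivAt_b {Λm Λp b : ℝ → ℝ}
    (hm : ContDiff ℝ 2 Λm) (hp : ContDiff ℝ 2 Λp) (hb : ContDiff ℝ 1 b)
    (hp' : ∀ ζ : ℝ, deriv Λp ζ < 0) (hcomp : ∀ α : ℝ, Λp (b α) = Λm α) (a : ℝ) :
    HasDerivAt b (deriv Λm a / deriv Λp (b a)) a := by
  have hbd := (hb.differentiable one_ne_zero a).hasDerivAt
  have h1 := ((hp.differentiable two_ne_zero (b a)).hasDerivAt).comp a hbd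
  have h2 := (hm.differentiable two_ne_zero a).hasDerivAt
  have he : Λp ∘ b = Λm := funext hcomp
  rw [he] at h1
  have h3 := h1.unique h2
  have : deriv Λm a / deriv Λp (b a) = deriv b a := by
    rw [← h3]; field_simp [(hp' (b a)).ne]
  rwa [this]

lemma hasDerivAt_integral_along {g b : ℝ → ℝ} (hg : Continuous g) {a b' : ℝ}
    (hb : HasDerivAt b b' a) :
    HasDerivAt (fun s => ∫ ζ in s..b s, g ζ) (g (b a) * b' - g a) a := by
  have key : ∀ y, HasDerivAt (fun u => ∫ ζ in (0 : ℝ)..u, g ζ) (g y) y := fun y =>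
    intervalIntegral.integral_hasDerivAt_right (hg.intervalIntegrable _ _)
      hg.stronglyMeasurable.stronglyMeasurableAtFilter hg.continuousAt
  have h := ((key (b a)).comp a hb).sub (key a)
  refine h.congr_of_eventuallyEq (Filter.Eventually.of_forall fun s => ?_)
  exact (intervalIntegral.integral_interval_sub_left (hg.intervalIntegrable _ _)
    (hg.intervalIntegrable _ _)).symm

lemma hasDerivAt_tmap {Λm Λp b : ℝ → ℝ}
    (hm : ContDiff ℝ 2 Λm) (hp : ContDiff ℝ 2 Λp) (hb : ContDiff ℝ 1 b)
    (hlt : ∀ ζ : ℝ, Λm ζ < Λp ζ)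
    (hp' : ∀ ζ : ℝ, deriv Λp ζ < 0) (hcomp : ∀ α : ℝ, Λp (b α) = Λm α) (a : ℝ) :
    HasDerivAt (fun s => tmap Λm Λp s (b s)) (ffun Λm Λp b a / deriv Λp (b a)) a := by
  have hD : ∀ ζ, Λp ζ - Λm ζ ≠ 0 := fun ζ => (sub_pos.2 (hlt ζ)).ne'
  have hg : Continuous fun ζ => 1 / (Λp ζ - Λm ζ) :=
    continuous_const.div (hp.continuous.sub hm.continuous) hD
  refine (hasDerivAt_integral_along hg (hasDerivAt_b hm hp hb hp' hcomp a)).congr_deriv ?_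
  have h1 := hD a
  have h2 := hD (b a)
  have h3 := (hp' (b a)).ne
  unfold ffun
  field_simp

/-- The characteristic relation `x' = Λm * t'` along the curve `α ↦ (α, b α)`. -/
lemma hasDerivAt_xmap {Λm Λp b : ℝ → ℝ}
    (hm : ContDiff ℝ 2 Λm) (hp : ContDiff ℝ 2 Λp) (hb : ContDiff ℝ 1 b)
    (hlt : ∀ ζ : ℝ, Λm ζ < Λp ζ)
    (hp' : ∀ ζ : ℝ, deriv Λp ζ < 0) (hcomp : ∀ α : ℝ, Λp (b α) = Λm α) (a : ℝ) :
    HasDerivAt (fun s => xmap Λm Λp s (b s))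
      (Λm a * (ffun Λm Λp b a / deriv Λp (b a))) a := by
  have hD : ∀ ζ, Λp ζ - Λm ζ ≠ 0 := fun ζ => (sub_pos.2 (hlt ζ)).ne'
  have hg : Continuous fun ζ => (Λp ζ + Λm ζ) / (Λp ζ - Λm ζ) :=
    (hp.continuous.add hm.continuous).div (hp.continuous.sub hm.continuous) hD
  have hbd := hasDerivAt_b hm hp hb hp' hcomp a
  refine ((((hasDerivAt_id a).add hbd).add
    (hasDerivAt_integral_along hg hbd)).const_mul (1 / 2)).congr_deriv ?_
  have h1 := hD a
  have h2 := hD (b a)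
  have h3 := (hp' (b a)).ne
  unfold ffun
  rw [hcomp a] at h2 ⊢
  field_simp
  ring

/-- Under assumptions (H1)–(H5), `(α₀, β₀)` is a cusp point of the hodograph
map: the derivative of `α ↦ (t(α, b(α)), x(α, b(α)))` vanishes at `α₀` while
its second derivative does not; moreover the second derivative of
`α ↦ t(α, b(α))` at `α₀` equals `f'(α₀)/Λ₊'(β₀) > 0`. -/
theorem cusp_point_at_blowup
    (Λm Λp b : ℝ → ℝ)
    (hm : ContDiff ℝ 2 Λm) (hp : ContDiff ℝ 2 Λp) (hb : ContDiff ℝ 1 b)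
    (hlt : ∀ ζ : ℝ, Λm ζ < Λp ζ)
    (hm' : ∀ ζ : ℝ, deriv Λm ζ < 0) (hp' : ∀ ζ : ℝ, deriv Λp ζ < 0)
    (hcomp : ∀ α : ℝ, Λp (b α) = Λm α)
    (α₀ β₀ : ℝ) (hβ : b α₀ = β₀) (hαβ : α₀ < β₀)
    (hm0 : Λm α₀ = 0) (hp0 : Λp β₀ = 0)
    (hf0 : ffun Λm Λp b α₀ = 0)
    (hf' : deriv (ffun Λm Λp b) α₀ < 0) :
    deriv (fun a => ((tmap Λm Λp a (b a), xmap Λm Λp a (b a)) : ℝ × ℝ)) α₀ = 0 ∧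
    deriv (deriv (fun a => ((tmap Λm Λp a (b a), xmap Λm Λp a (b a)) : ℝ × ℝ))) α₀ ≠ 0 ∧
    deriv (deriv (fun a => tmap Λm Λp a (b a))) α₀
      = deriv (ffun Λm Λp b) α₀ / deriv Λp β₀ ∧
    0 < deriv (deriv (fun a => tmap Λm Λp a (b a))) α₀ := by
  have ht := hasDerivAt_tmap hm hp hb hlt hp' hcomp
  have hx := hasDerivAt_xmap hm hp hb hlt hp' hcomp
  have hpair := fun a => (ht a).prodMk (hx a)
  have hdt : deriv (fun a => tmap Λm Λp a (b a))
      = fun a => ffun Λm Λp b a / deriv Λp (b a) := funext fun a => (ht a).deriv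
  have hdpair : deriv (fun a => ((tmap Λm Λp a (b a), xmap Λm Λp a (b a)) : ℝ × ℝ))
      = fun a => (ffun Λm Λp b a / deriv Λp (b a),
          Λm a * (ffun Λm Λp b a / deriv Λp (b a))) := funext fun a => (hpair a).deriv
  -- A nonzero value of `deriv` rules out the junk value, so `f` is differentiable at `α₀`.
  have hf : HasDerivAt (ffun Λm Λp b) (deriv (ffun Λm Λp b) α₀) α₀ :=
    (differentiableAt_of_deriv_ne_zero hf'.ne).hasDerivAt
  have hdp : Differentiable ℝ (deriv Λp) :=
    (hp.iterate_deriv' 1 1).differentiable one_ne_zero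
  have hq := ((hdp (b α₀)).comp α₀ (hb.differentiable one_ne_zero α₀)).hasDerivAt
  have hne : deriv Λp β₀ ≠ 0 := (hp' β₀).ne
  have h2t : HasDerivAt (fun a => ffun Λm Λp b a / deriv Λp (b a))
      (deriv (ffun Λm Λp b) α₀ / deriv Λp β₀) α₀ := by
    refine (hf.div hq (hp' (b α₀)).ne).congr_deriv ?_
    simp only [Function.comp, hβ, hf0]
    field_simp
    ring
  have hpos : 0 < deriv (ffun Λm Λp b) α₀ / deriv Λp β₀ := div_pos_of_neg_of_neg hf' (hp' β₀)
  have h2pair := h2t.prodMk (((hm.differentiable two_ne_zero α₀).hasDerivAt).mul h2t)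
  refine ⟨?_, ?_, ?_, ?_⟩
  · rw [hdpair]
    simp [hf0]
  · rw [hdpair]
    intro h
    have h0 := congrArg Prod.fst (h2pair.deriv.symm.trans h)
    exact hpos.ne' h0
  · rw [hdt, h2t.deriv]
  · rwa [hdt, h2t.deriv]
end
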